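/- Let n ≥ 6 and let A, B, C, D be four distinct vertices of K_n. Consider the position of n-Sim consisting of exactly three colored edges: the green edges AB and BC, and the red edge AD, with all other edges of K_n uncolored and PII to move. Then PII has a winning strategy from this position. -/

import Mathlib

/-- The set of valid (non-loop) edges of the complete graph on `Fin n`. -/
def simEdges (n : ℕ) : Finset (Sym2 (Fin n)) :=
  Finset.univ.filter (fun e => ¬ e.IsDiag)

/-- An edge set `S` contains a triangle: three edges of `S` spanned by three
distinct vertices. -/
def HasTriangle {n : ℕ} (S : Finset (Sym2 (Fin n))) : Prop :=
  ∃ a b c : Fin n, a ≠ b ∧ a ≠ c ∧ b ≠ c ∧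
    s(a, b) ∈ S ∧ s(a, c) ∈ S ∧ s(b, c) ∈ S

/-- The uncolored edges, given the two players' edge sets. -/
def avail {n : ℕ} (A B : Finset (Sym2 (Fin n))) : Finset (Sym2 (Fin n)) :=
  simEdges n \ (A ∪ B)

/-- `MoverWins own opp` : in the game of n-Sim (players alternately claim an
uncolored edge of `K n`, and whoever first has a triangle in their own edges
loses), the player about to move, whose already-claimed edges are `own` while
the opponent's are `opp`, has a winning strategy.

The mover wins iff they can claim some uncolored edge `e` not creating a
triangle in their own color, so that afterwards the opponent still has to move
(there is an uncolored edge left; otherwise the game is a draw), and every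
reply `f` of the opponent either completes a triangle in the opponent's color
(so the opponent loses) or leads to a position where the original mover again
wins. -/
inductive MoverWins {n : ℕ} : Finset (Sym2 (Fin n)) → Finset (Sym2 (Fin n)) → Prop where
  | step (own opp : Finset (Sym2 (Fin n))) (e : Sym2 (Fin n))
      (he : e ∈ avail own opp)
      (hsafe : ¬ HasTriangle (insert e own))
      (hne : (avail opp (insert e own)).Nonempty)
      (hreplies : ∀ f ∈ avail opp (insert e own), ¬ HasTriangle (insert f opp) →
        MoverWins (insert e own) (insert f opp)) :
      MoverWins own opp

/-- `NonMoverWins own opp` : the player NOT about to move (the one whose edges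
are `opp`) has a winning strategy: there is at least one uncolored edge (the
mover must move), and every non-losing move of the mover leads to a position
won by the (new) mover, i.e. by the original non-mover. -/
def NonMoverWins {n : ℕ} (own opp : Finset (Sym2 (Fin n))) : Prop :=
  (avail own opp).Nonempty ∧
    ∀ e ∈ avail own opp, ¬ HasTriangle (insert e own) →
      MoverWins opp (insert e own)

/-- The green edges of a drawn `K₅` on the five distinct vertices
`v 0, …, v 4`: the pentagon `v i — v (i+1)`. -/
def greenK5 {n : ℕ} (v : Fin 5 → Fin n) : Finset (Sym2 (Fin n)) :=
  Finset.univ.image (fun i : Fin 5 => s(v i, v (i + 1)))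

/-- The red edges of a drawn `K₅` on the five distinct vertices
`v 0, …, v 4`: the complementary pentagram `v i — v (i+2)`. -/
def redK5 {n : ℕ} (v : Fin 5 → Fin n) : Finset (Sym2 (Fin n)) :=
  Finset.univ.image (fun i : Fin 5 => s(v i, v (i + 2)))

/-!
Strategy stealing. Since `R(3, 3) ≤ 6` there are no draws, so if PII had no winning strategy then
PI would have one. Let PII play `BD`. Then `AB` is only a burden to PI: PII could never play it,
since it would close the triangle `ABD`. Without `AB` the position consists of the green edge `BC`
and the red path `BDA`, with PI to move: it is the initial position with the colors exchanged and
the vertices relabelled along the cycle `A → B → D → C → A`. So PII wins it by PI's own strategy.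
-/

section Ramsey

variable {V : Type*} {G : SimpleGraph V}

theorem degree_lt_of_cliqueFree_three {k : ℕ} (hG : G.CliqueFree 3) (hGc : Gᶜ.CliqueFree k)
    (v : V) [Fintype (G.neighborSet v)] : G.degree v < k := by
  by_contra! hk
  have hclique : Gᶜ.IsNClique (G.degree v) (G.neighborFinset v) := by
    refine ⟨?_, rfl⟩
    simpa using G.isIndepSet_neighborSet_of_triangleFree hG v
  exact hclique.not_cliqueFree (hGc.mono hk)

theorem card_le_five_of_cliqueFree_three [Fintype V] (hG : G.CliqueFree 3) (hGc : Gᶜ.CliqueFree 3) :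
    Fintype.card V ≤ 5 := by
  classical
  by_contra! hV
  obtain ⟨v⟩ : Nonempty V := Fintype.card_pos_iff.1 (by lia)
  have hdeg : G.degree v < 3 := degree_lt_of_cliqueFree_three hG hGc v
  have hdegc : Gᶜ.degree v < 3 :=
    degree_lt_of_cliqueFree_three hGc (by rwa [compl_compl]) v
  rw [G.degree_compl] at hdegc
  lia

end Ramsey

variable {n : ℕ} {S T own opp W L L' : Finset (Sym2 (Fin n))} {e : Sym2 (Fin n)}

theorem HasTriangle.mono (h : S ⊆ T) : HasTriangle S → HasTriangle T :=
  fun ⟨a, b, c, hab, hac, hbc, h₁, h₂, h₃⟩ => ⟨a, b, c, hab, hac, hbc, h h₁, h h₂, h h₃⟩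

theorem HasTriangle.two_lt_card (h : HasTriangle S) : 2 < S.card := by
  obtain ⟨a, b, c, hab, hac, hbc, h₁, h₂, h₃⟩ := h
  refine Finset.two_lt_card.2 ⟨_, h₁, _, h₂, _, h₃, ?_, ?_, ?_⟩ <;>
    simp only [ne_eq, Sym2.eq_iff] <;> tauto

theorem cliqueFree_fromEdgeSet_iff :
    (SimpleGraph.fromEdgeSet (S : Set (Sym2 (Fin n)))).CliqueFree 3 ↔ ¬ HasTriangle S := by
  constructor
  · rintro hfree ⟨a, b, c, hab, hac, hbc, h₁, h₂, h₃⟩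
    refine hfree {a, b, c} (SimpleGraph.is3Clique_triple_iff.2 ?_)
    simp only [SimpleGraph.fromEdgeSet_adj, Finset.mem_coe]
    exact ⟨⟨h₁, hab⟩, ⟨h₂, hac⟩, ⟨h₃, hbc⟩⟩
  · intro hfree t ht
    obtain ⟨a, b, c, ⟨h₁, hab⟩, ⟨h₂, hac⟩, ⟨h₃, hbc⟩, -⟩ := SimpleGraph.is3Clique_iff.1 ht
    exact hfree ⟨a, b, c, hab, hac, hbc, h₁, h₂, h₃⟩

theorem mem_avail : e ∈ avail S T ↔ ¬ e.IsDiag ∧ e ∉ S ∧ e ∉ T := by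
  simp [avail, simEdges]

theorem avail_nonempty (hn : 6 ≤ n) (hS : ¬ HasTriangle S) (hT : ¬ HasTriangle T) :
    (avail S T).Nonempty := by
  by_contra hempty
  have hle : (SimpleGraph.fromEdgeSet (S : Set (Sym2 (Fin n))))ᶜ ≤
      SimpleGraph.fromEdgeSet (T : Set (Sym2 (Fin n))) := by
    intro x y
    have : s(x, y) ∉ avail S T := fun h => hempty ⟨_, h⟩
    simp only [mem_avail, Sym2.mk_isDiag_iff] at this
    simp only [SimpleGraph.compl_adj, SimpleGraph.fromEdgeSet_adj, Finset.mem_coe]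
    tauto
  have hcard := card_le_five_of_cliqueFree_three (cliqueFree_fromEdgeSet_iff.2 hS)
    ((cliqueFree_fromEdgeSet_iff.2 hT).anti hle)
  rw [Fintype.card_fin] at hcard
  lia

theorem avail_insert_ssubset (he : e ∈ avail own opp) :
    avail opp (insert e own) ⊂ avail own opp := by
  refine (Finset.ssubset_iff_of_subset fun f => ?_).2 ⟨e, he, ?_⟩ <;>
    simp only [mem_avail, Finset.mem_insert] <;> tauto

theorem moverWins_iff_exists_nonMoverWins : MoverWins own opp ↔
    ∃ e ∈ avail own opp, ¬ HasTriangle (insert e own) ∧ NonMoverWins opp (insert e own) :=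
  ⟨fun | .step _ _ e he hsafe hne hreplies => ⟨e, he, hsafe, hne, hreplies⟩,
    fun ⟨e, he, hsafe, hne, hreplies⟩ => .step _ _ e he hsafe hne hreplies⟩

theorem moverWins_or_nonMoverWins (hn : 6 ≤ n) (own opp : Finset (Sym2 (Fin n)))
    (hown : ¬ HasTriangle own) (hopp : ¬ HasTriangle opp) :
    MoverWins own opp ∨ NonMoverWins own opp := by
  refine or_iff_not_imp_left.2 fun hlose => ⟨avail_nonempty hn hown hopp, fun e he hsafe => ?_⟩
  have hdet := moverWins_or_nonMoverWins hn opp (insert e own) hopp hsafe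
  exact hdet.resolve_right fun hwin =>
    hlose (moverWins_iff_exists_nonMoverWins.2 ⟨e, he, hsafe, hwin⟩)
termination_by (avail own opp).card
decreasing_by exact Finset.card_lt_card (avail_insert_ssubset he)

theorem avail_anti_left (hL : L ⊆ L') : avail L' W ⊆ avail L W :=
  Finset.sdiff_subset_sdiff subset_rfl (Finset.union_subset_union hL subset_rfl)

/-- The winner `W` never plays the edges of `L' \ L`, so taking them only restricts the loser. -/
theorem MoverWins.of_subset_of_unplayable (hn : 6 ≤ n) (h : MoverWins W L) (hL : L ⊆ L')
    (hL' : ¬ HasTriangle L') (hunplayable : ∀ x ∈ L' \ L, HasTriangle (insert x W)) :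
    MoverWins W L' := by
  induction h generalizing L' with
  | step W L e he hsafe _ _ ih =>
    obtain ⟨he_edge, heW, heL⟩ := mem_avail.1 he
    have heL' : e ∉ L' := fun h => hsafe (hunplayable e (Finset.mem_sdiff.2 ⟨h, heL⟩))
    refine .step W L' e (mem_avail.2 ⟨he_edge, heW, heL'⟩) hsafe
      (avail_nonempty hn hL' hsafe) fun f hf hfsafe => ?_
    have hsub : insert f L ⊆ insert f L' := Finset.insert_subset_insert f hL
    refine ih f (avail_anti_left hL hf) (fun h => hfsafe (h.mono hsub)) hsub hfsafe
      fun x hx => ?_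
    exact (hunplayable x (by grind)).mono (Finset.insert_subset_insert x (Finset.subset_insert e W))

theorem NonMoverWins.of_subset_of_unplayable (hn : 6 ≤ n) (h : NonMoverWins L W) (hL : L ⊆ L')
    (hL' : ¬ HasTriangle L') (hW : ¬ HasTriangle W)
    (hunplayable : ∀ x ∈ L' \ L, HasTriangle (insert x W)) : NonMoverWins L' W := by
  refine ⟨avail_nonempty hn hL' hW, fun f hf hfsafe => ?_⟩
  have hsub : insert f L ⊆ insert f L' := Finset.insert_subset_insert f hL
  have hwin : MoverWins W (insert f L) :=
    h.2 f (avail_anti_left hL hf) fun h => hfsafe (h.mono hsub)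
  exact hwin.of_subset_of_unplayable hn hsub hfsafe fun x hx => hunplayable x (by grind)

section Relabel

variable (σ : Equiv.Perm (Fin n))

theorem hasTriangle_image_iff : HasTriangle (S.image (Sym2.map σ)) ↔ HasTriangle S := by
  have hmem (a b : Fin n) : s(σ a, σ b) ∈ S.image (Sym2.map σ) ↔ s(a, b) ∈ S :=
    (Sym2.map.injective σ.injective).mem_finset_image (a := s(a, b))
  refine (σ.exists_congr fun a => σ.exists_congr fun b => σ.exists_congr fun c => ?_).symm
  simp only [σ.injective.ne_iff, hmem]

theorem image_simEdges : (simEdges n).image (Sym2.map σ) = simEdges n := by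
  have hsurj : Function.Surjective (Sym2.map σ) := fun e =>
    ⟨e.map σ.symm, by simp [Sym2.map_map]⟩
  conv_rhs => rw [simEdges, ← Finset.image_univ_of_surjective hsurj, Finset.filter_image]
  simp only [simEdges, Sym2.isDiag_map σ.injective]

theorem image_avail :
    (avail S T).image (Sym2.map σ) = avail (S.image (Sym2.map σ)) (T.image (Sym2.map σ)) := by
  rw [avail, Finset.image_sdiff _ _ (Sym2.map.injective σ.injective), Finset.image_union,
    image_simEdges, avail]

theorem MoverWins.image (h : MoverWins own opp) :
    MoverWins (own.image (Sym2.map σ)) (opp.image (Sym2.map σ)) := by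
  induction h with
  | step own opp e he hsafe hne _ ih =>
    refine .step _ _ (Sym2.map σ e) ?_ ?_ ?_ ?_ <;>
      simp only [← Finset.image_insert, ← image_avail, hasTriangle_image_iff,
        Finset.forall_mem_image]
    · exact Finset.mem_image_of_mem _ he
    · exact hsafe
    · exact hne.image _
    · exact ih

theorem NonMoverWins.image (h : NonMoverWins own opp) :
    NonMoverWins (own.image (Sym2.map σ)) (opp.image (Sym2.map σ)) := by
  simp only [NonMoverWins, ← image_avail, Finset.forall_mem_image, ← Finset.image_insert,
    hasTriangle_image_iff]
  exact ⟨h.1.image _, fun e he hsafe => (h.2 e he hsafe).image σ⟩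

end Relabel

theorem moverWins_of_strategy_stealing (hn : 6 ≤ n) (σ : Equiv.Perm (Fin n))
    (he : e ∈ avail own opp) (hsafe : ¬ HasTriangle (insert e own))
    (hown : own.image (Sym2.map σ) ⊆ opp) (hopp : opp.image (Sym2.map σ) = insert e own)
    (hunplayable : ∀ x ∈ opp \ own.image (Sym2.map σ), HasTriangle (insert x (insert e own))) :
    MoverWins own opp := by
  have hown_free : ¬ HasTriangle own := fun h => hsafe (h.mono (Finset.subset_insert e own))
  have hopp_free : ¬ HasTriangle opp := by rwa [← hasTriangle_image_iff σ, hopp]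
  by_contra hlose
  have hwin : NonMoverWins own opp :=
    (moverWins_or_nonMoverWins hn own opp hown_free hopp_free).resolve_left hlose
  have hstolen : NonMoverWins (own.image (Sym2.map σ)) (insert e own) := hopp ▸ hwin.image σ
  have hwin' : NonMoverWins opp (insert e own) :=
    hstolen.of_subset_of_unplayable hn hown hopp_free hsafe hunplayable
  exact hlose (moverWins_iff_exists_nonMoverWins.2 ⟨e, he, hsafe, hwin'⟩)

theorem exists_perm_four_cycle {α : Type*} {a b c d : α} (hab : a ≠ b)
    (hac : a ≠ c) (had : a ≠ d) (hbc : b ≠ c) (hbd : b ≠ d) (hcd : c ≠ d) :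
    ∃ σ : Equiv.Perm α, σ a = b ∧ σ b = c ∧ σ c = d ∧ σ d = a := by
  classical
  refine ⟨[a, b, c, d].formPerm, ?_⟩
  simp only [List.formPerm_cons_cons, List.formPerm_singleton, mul_one, Equiv.Perm.mul_apply]
  grind

/-- **Theorem 3.** For `n ≥ 6` and distinct vertices `A, B, C, D`, the position
with exactly three colored edges — green `AB` and `BC`, red `AD` — and PII
(red) to move, is a win for PII. -/
theorem three_move_position_secondPlayerWin (n : ℕ) (hn : 6 ≤ n)
    (A B C D : Fin n) (hAB : A ≠ B) (hAC : A ≠ C) (hAD : A ≠ D)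
    (hBC : B ≠ C) (hBD : B ≠ D) (hCD : C ≠ D) :
    MoverWins ({s(A, D)} : Finset (Sym2 (Fin n))) {s(A, B), s(B, C)} := by
  obtain ⟨σ, hσA, hσB, hσD, hσC⟩ := exists_perm_four_cycle hAB hAD hAC hBD hBC hCD.symm
  have hred : ({s(A, D)} : Finset _).image (Sym2.map σ) = {s(B, C)} := by
    simp [hσA, hσD]
  have hgreen : ({s(A, B), s(B, C)} : Finset _).image (Sym2.map σ) = {s(B, D), s(A, D)} := by
    simp [hσA, hσB, hσC, Finset.image_insert, Sym2.eq_swap (a := D)]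
  have havail : s(B, D) ∈ avail {s(A, D)} {s(A, B), s(B, C)} := by
    simp only [mem_avail, Sym2.mk_isDiag_iff, Finset.mem_insert, Finset.mem_singleton, Sym2.eq_iff]
    grind
  have hsafe : ¬ HasTriangle {s(B, D), s(A, D)} :=
    fun h => h.two_lt_card.not_ge Finset.card_le_two
  have hAB_unplayable : HasTriangle {s(A, B), s(B, D), s(A, D)} :=
    ⟨A, B, D, hAB, hAD, hBD, by simp, by simp, by simp⟩
  refine moverWins_of_strategy_stealing hn σ havail hsafe (by simp [hred]) hgreen fun x hx => ?_
  obtain rfl : x = s(A, B) := by grind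
  exact hAB_unplayable
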